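/- Suppose k ≥ 3. Let f be a symmetric k-ary Boolean function that is not in EASY(k). Then either the arity-2 Boolean function AND is not a polymorphism of f, or the arity-2 Boolean function OR is not a polymorphism of f (or both). -/

import Mathlib

/-- The symmetric Boolean function of arity `k` determined by the values
`w 0, …, w k`: it returns `w ℓ` on inputs with exactly `ℓ` ones. -/
def symBoolFun (k : ℕ) (w : ℕ → Bool) : (Fin k → Bool) → Bool :=
  fun x => w (Finset.univ.filter (fun j => x j = true)).card

/-- `g : {0,1}^m → {0,1}` is a polymorphism of `f : {0,1}^k → {0,1}`: for all
`m`-tuples of satisfying assignments of `f`, applying `g` coordinate-wise yields a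
satisfying assignment of `f`. -/
def IsPolymorphism {m k : ℕ} (g : (Fin m → Bool) → Bool) (f : (Fin k → Bool) → Bool) :
    Prop :=
  ∀ x : Fin m → Fin k → Bool, (∀ i, f (x i) = true) →
    f (fun j => g (fun i => x i j)) = true

/-!
The satisfying assignments of a symmetric function, read as subsets of `Fin k`, are the sets whose
cardinality lies in `{ℓ | w ℓ = true}`; AND and OR act on them as intersection and union.
If `0 < ℓ < k`, two sets of size `ℓ` that differ by exchanging one element have an intersection of
size `ℓ - 1` and a union of size `ℓ + 1`. Hence, when AND and OR are both polymorphisms, one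
accepted weight strictly between `0` and `k` spreads to all weights and `f` is constant. Otherwise
only the weights `0` and `k` can be accepted, which leaves the constant `0` and the indicators that
all arguments are `0`, that all are `1`, and that all are equal.
-/

open Finset

theorem exists_card_eq_card_inter_union {α : Type*} [Fintype α] [DecidableEq α] {l : ℕ}
    (hl : 0 < l) (hlα : l < Fintype.card α) :
    ∃ s t : Finset α, #s = l ∧ #t = l ∧ #(s ∩ t) = l - 1 ∧ #(s ∪ t) = l + 1 := by
  obtain ⟨u, -, hu⟩ := exists_subset_card_eq (s := (univ : Finset α)) (n := l - 1)
    (by rw [card_univ]; omega)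
  obtain ⟨a, ha, b, hb, hab⟩ : ∃ a ∈ uᶜ, ∃ b ∈ uᶜ, a ≠ b :=
    one_lt_card.mp (by rw [card_compl]; omega)
  rw [mem_compl] at ha hb
  have hs : #(insert a u) = l := by rw [card_insert_of_notMem ha]; omega
  have ht : #(insert b u) = l := by rw [card_insert_of_notMem hb]; omega
  have hinter : insert a u ∩ insert b u = u := by grind
  have hunion := card_union_add_card_inter (insert a u) (insert b u)
  rw [hinter] at hunion
  exact ⟨insert a u, insert b u, hs, ht, by rw [hinter, hu], by omega⟩

section Weights

variable {k l m : ℕ} {w : ℕ → Bool}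

theorem symBoolFun_decide_mem (s : Finset (Fin k)) :
    symBoolFun k w (fun j => decide (j ∈ s)) = w #s := by
  simp [symBoolFun]

namespace IsPolymorphism

theorem weight_card_filter {g : (Fin m → Bool) → Bool}
    (hg : IsPolymorphism g (symBoolFun k w)) (s : Fin m → Finset (Fin k))
    (hs : ∀ i, w #(s i) = true) :
    w #{j | g (fun i => decide (j ∈ s i)) = true} = true :=
  hg (fun i j => decide (j ∈ s i)) fun i => (symBoolFun_decide_mem (s i)).trans (hs i)

theorem weight_card_inter_of_and
    (hand : IsPolymorphism (fun x : Fin 2 → Bool => x 0 && x 1) (symBoolFun k w))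
    {s t : Finset (Fin k)} (hs : w #s = true) (ht : w #t = true) : w #(s ∩ t) = true := by
  have hinter : ({j | (decide (j ∈ s) && decide (j ∈ t)) = true} : Finset (Fin k)) = s ∩ t := by
    ext; simp
  rw [← hinter]
  exact hand.weight_card_filter ![s, t] (Fin.forall_fin_two.mpr ⟨hs, ht⟩)

theorem weight_card_union_of_or
    (hor : IsPolymorphism (fun x : Fin 2 → Bool => x 0 || x 1) (symBoolFun k w))
    {s t : Finset (Fin k)} (hs : w #s = true) (ht : w #t = true) : w #(s ∪ t) = true := by
  have hunion : ({j | (decide (j ∈ s) || decide (j ∈ t)) = true} : Finset (Fin k)) = s ∪ t := by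
    ext; simp
  rw [← hunion]
  exact hor.weight_card_filter ![s, t] (Fin.forall_fin_two.mpr ⟨hs, ht⟩)

theorem weight_of_le_of_and
    (hand : IsPolymorphism (fun x : Fin 2 → Bool => x 0 && x 1) (symBoolFun k w))
    (hl : l < k) (hml : m ≤ l) (hw : w l = true) : w m = true := by
  induction l, hml using Nat.le_induction with
  | base => exact hw
  | succ n _ ih =>
    obtain ⟨s, t, hs, ht, hinter, -⟩ :=
      exists_card_eq_card_inter_union (α := Fin k) n.succ_pos (by rwa [Fintype.card_fin])
    rw [Nat.succ_sub_one] at hinter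
    have hwn : w n = true := hinter ▸ hand.weight_card_inter_of_and (hs ▸ hw) (ht ▸ hw)
    exact ih (by omega) hwn

theorem weight_of_ge_of_or
    (hor : IsPolymorphism (fun x : Fin 2 → Bool => x 0 || x 1) (symBoolFun k w))
    (hl : 0 < l) (hlm : l ≤ m) (hm : m ≤ k) (hw : w l = true) : w m = true := by
  induction m, hlm using Nat.le_induction with
  | base => exact hw
  | succ n hln ih =>
    have hwn : w n = true := ih (by omega)
    obtain ⟨s, t, hs, ht, -, hunion⟩ :=
      exists_card_eq_card_inter_union (α := Fin k) (hl.trans_le hln) (by rwa [Fintype.card_fin])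
    exact hunion ▸ hor.weight_card_union_of_or (hs ▸ hwn) (ht ▸ hwn)

end IsPolymorphism

theorem eq_decide_endpoints_of_interior_eq_false (hw : ∀ l, 0 < l → l < k → w l = false) :
    (∀ l ≤ k, w l = false) ∨ (∀ l ≤ k, w l = decide (l = 0)) ∨
      (∀ l ≤ k, w l = decide (l = k)) ∨ ∀ l ≤ k, w l = decide (l = 0 ∨ l = k) := by
  cases h0 : w 0 <;> cases hk : w k
  · left; grind
  · right; right; left; grind
  · right; left; grind
  · right; right; right; grind

end Weights

theorem not_and_or_not_or_polymorphism_general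
    (k : ℕ) (w : ℕ → Bool)
    (h1 : ¬ ∀ ℓ ≤ k, w ℓ = false)
    (h2 : ¬ ∀ ℓ ≤ k, w ℓ = true)
    (h3 : ¬ ∀ ℓ ≤ k, w ℓ = decide (ℓ = 0))
    (h4 : ¬ ∀ ℓ ≤ k, w ℓ = decide (ℓ = k))
    (h5 : ¬ ∀ ℓ ≤ k, w ℓ = decide (ℓ = 0 ∨ ℓ = k)) :
    ¬ IsPolymorphism (fun x : Fin 2 → Bool => x 0 && x 1) (symBoolFun k w) ∨
    ¬ IsPolymorphism (fun x : Fin 2 → Bool => x 0 || x 1) (symBoolFun k w) := by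
  rw [← not_and_or]
  rintro ⟨hand, hor⟩
  have hinterior : ∀ l, 0 < l → l < k → w l = false := by
    refine fun l hl hlk => Bool.eq_false_iff.mpr fun hw => h2 fun m hm => ?_
    obtain hml | hlm := le_total m l
    · exact hand.weight_of_le_of_and hlk hml hw
    · exact hor.weight_of_ge_of_or hl hlm hm hw
  obtain h | h | h | h := eq_decide_endpoints_of_interior_eq_false hinterior
  exacts [h1 h, h3 h, h4 h, h5 h]

/-- Lemma 4.5: for `k ≥ 3`, a symmetric Boolean function `f` that is
not one of the seven functions in `EASY(k)` fails to have AND or fails to have OR as a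
polymorphism. -/
theorem not_and_or_not_or_polymorphism
    (k : ℕ) (hk : 3 ≤ k) (w : ℕ → Bool)
    (h1 : ¬ ∀ ℓ ≤ k, w ℓ = false)
    (h2 : ¬ ∀ ℓ ≤ k, w ℓ = true)
    (h3 : ¬ ∀ ℓ ≤ k, w ℓ = decide (ℓ = 0))
    (h4 : ¬ ∀ ℓ ≤ k, w ℓ = decide (ℓ = k))
    (h5 : ¬ ∀ ℓ ≤ k, w ℓ = decide (ℓ = 0 ∨ ℓ = k))
    (h6 : ¬ ∀ ℓ ≤ k, w ℓ = decide (ℓ % 2 = 0))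
    (h7 : ¬ ∀ ℓ ≤ k, w ℓ = decide (ℓ % 2 = 1)) :
    ¬ IsPolymorphism (fun x : Fin 2 → Bool => x 0 && x 1) (symBoolFun k w) ∨
    ¬ IsPolymorphism (fun x : Fin 2 → Bool => x 0 || x 1) (symBoolFun k w) :=
  not_and_or_not_or_polymorphism_general k w h1 h2 h3 h4 h5
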